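/- Let c₁, c₂, c₃ ∈ 𝔽_p^* and set σ = Σ_{c ∈ 𝔽_p^*} Σ_{x ∈ 𝔽_p^*} χ̄₁(x(c−c₁)) Σ_{y ∈ 𝔽_p^*} χ̄₁(−y c₂) η̄(−cy) Σ_{z ∈ 𝔽_p^*} χ̄₁(−z²c/(4y) − z c₃). Then σ = (p² − 2p − 1)·Ḡ if c₃² − c₁c₂ = 0, and σ = −(p+1)·Ḡ − p·η̄(c₁c₂)·Ḡ if c₃² − c₁c₂ ≠ 0. -/

import Mathlib

open Finset
open scoped Classical

noncomputable section

/-- `ζ_p = exp(2πi/p)`. -/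
def zeta (p : ℕ) : ℂ := Complex.exp (2 * Real.pi * Complex.I / p)

/-- The canonical additive character of `ℤ/p`: `χ̄₁(c) = ζ_p^c`. -/
def chiBar (p : ℕ) (c : ZMod p) : ℂ := zeta p ^ c.val

/-- The quadratic character of `(ℤ/p)^*`, extended by `η̄(0) = 0`. -/
def etaBar (p : ℕ) (c : ZMod p) : ℂ :=
  if c = 0 then 0 else if IsSquare c then 1 else -1

/-- The quadratic character of `F^*`, extended by `η(0) = 0`. -/
def etaQ (F : Type) [Field F] (x : F) : ℂ :=
  if x = 0 then 0 else if IsSquare x then 1 else -1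

/-- The absolute trace map from `F` to `ℤ/p`. -/
def Trq (p : ℕ) (F : Type) [Field F] [Algebra (ZMod p) F] (x : F) : ZMod p :=
  Algebra.trace (ZMod p) F x

/-- The canonical additive character of `F`: `χ₁(x) = ζ_p^{Tr x}`. -/
def chiQ (p : ℕ) (F : Type) [Field F] [Algebra (ZMod p) F] (x : F) : ℂ :=
  chiBar p (Trq p F x)

/-- The quadratic Gauss sum `G` over `F`. -/
def GaussQ (p : ℕ) (F : Type) [Field F] [Fintype F] [Algebra (ZMod p) F] : ℂ :=
  ∑ x ∈ univ.filter (fun x : F => x ≠ 0), etaQ F x * chiQ p F x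

/-- The quadratic Gauss sum `Ḡ` over `ℤ/p`. -/
def GaussP (p : ℕ) [NeZero p] : ℂ :=
  ∑ y ∈ univ.filter (fun y : ZMod p => y ≠ 0), etaBar p y * chiBar p y

/-!
The substitution `z = 2yw` makes the exponent linear in `y`, so the sum over `y` is the Gauss sum
shifted by a value of a quadratic polynomial: it equals `η((cw + c₃)² + (cc₂ - c₃²)) G`. What is
left of the sum over `y` and `z` is the elementary character sum `∑ u, η(u² + d)`, which is `q - 1`
for `d = 0` and otherwise `-1`, a Jacobi sum. Finally, orthogonality in `x` localizes the sum over
`c` at `c = c₁`, up to the correction for the missing term `x = 0`.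
-/

lemma sum_filter_ne_eq_sub {ι A : Type*} [Fintype ι] [DecidableEq ι] [AddCommGroup A]
    (f : ι → A) (a : ι) : ∑ x with x ≠ a, f x = ∑ x, f x - f a := by
  rw [filter_ne', sum_erase_eq_sub (mem_univ a)]

section FiniteField

variable {F R : Type*} [Field F] [Fintype F] [CommRing R]

lemma gaussSum_mulShift_of_sum_eq_zero {χ : MulChar F R} (hχ : ∑ a, χ a = 0) (ψ : AddChar F R)
    (a : F) : gaussSum χ (ψ.mulShift a) = χ⁻¹ a * gaussSum χ ψ := by
  rcases eq_or_ne a 0 with rfl | ha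
  · simp [gaussSum, hχ, MulChar.map_zero]
  · exact gaussSum_mulShift_eq χ ψ (Units.mk0 a ha)

variable [DecidableEq F]

lemma sum_ne_zero_comp_mul_left {A : Type*} [AddCommMonoid A] {a : F} (ha : a ≠ 0) (f : F → A) :
    ∑ x with x ≠ 0, f (a * x) = ∑ x with x ≠ 0, f x :=
  sum_equiv (Equiv.mulLeft₀ a ha) (by simp [ha]) fun _ _ ↦ rfl

lemma sum_comp_sq {A : Type*} [AddCommGroup A] (hF : ringChar F ≠ 2) (f : F → A) :
    ∑ x, f (x ^ 2) = ∑ u, (quadraticChar F u + 1) • f u := by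
  rw [← sum_fiberwise' univ (fun x : F ↦ x ^ 2)]
  refine sum_congr rfl fun u _ ↦ ?_
  rw [sum_const, ← natCast_zsmul, ← quadraticChar_card_sqrts hF u, Set.toFinset_ofPred]

lemma sum_quadraticChar_mul_quadraticChar_add (hF : ringChar F ≠ 2) (d : F) :
    ∑ u, quadraticChar F u * quadraticChar F (u + d) =
      if d = 0 then (Fintype.card F : ℤ) - 1 else -1 := by
  split_ifs with hd
  · have hsq : quadraticChar F * quadraticChar F = 1 := by
      rw [← sq, quadraticChar_isQuadratic F |>.sq_eq_one]
    simp_rw [hd, add_zero, ← MulChar.mul_apply, hsq, MulChar.sum_one_eq_card_units,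
      Fintype.card_units, Nat.cast_pred Fintype.card_pos]
  · calc ∑ u, quadraticChar F u * quadraticChar F (u + d)
        = ∑ v, quadraticChar F (-d * v) * quadraticChar F (-d * v + d) :=
          (Equiv.sum_comp (Equiv.mulLeft₀ (-d) (neg_ne_zero.mpr hd)) _).symm
      _ = ∑ v, quadraticChar F (-1) * (quadraticChar F v * quadraticChar F (1 - v)) := by
          refine sum_congr rfl fun v _ ↦ ?_
          rw [show -d * v = d * (-1 * v) by ring, show d * (-1 * v) + d = d * (1 - v) by ring]
          simp only [map_mul]
          linear_combination (quadraticChar F (-1) * quadraticChar F v *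
            quadraticChar F (1 - v)) * quadraticChar_sq_one hd
      _ = quadraticChar F (-1) * jacobiSum (quadraticChar F) (quadraticChar F)⁻¹ := by
          rw [← mul_sum, (quadraticChar_isQuadratic F).inv, jacobiSum]
      _ = -1 := by
          rw [jacobiSum_nontrivial_inv (quadraticChar_ne_one hF), mul_neg, ← sq,
            quadraticChar_sq_one (neg_ne_zero.mpr one_ne_zero)]

lemma sum_quadraticChar_sq_add (hF : ringChar F ≠ 2) (d : F) :
    ∑ u, quadraticChar F (u ^ 2 + d) = if d = 0 then (Fintype.card F : ℤ) - 1 else -1 := by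
  have hshift : ∑ u, quadraticChar F (u + d) = 0 := by
    rw [← quadraticChar_sum_zero hF]
    exact Equiv.sum_comp (Equiv.addRight d) (quadraticChar F)
  simp_rw [sum_comp_sq hF fun u ↦ quadraticChar F (u + d), smul_eq_mul, add_mul, one_mul,
    sum_add_distrib, hshift, add_zero, sum_quadraticChar_mul_quadraticChar_add hF]

local notation "η" => MulChar.ringHomComp (quadraticChar F) (Int.castRingHom R)

lemma gaussSum_quadraticChar_mulShift (hF : ringChar F ≠ 2) (ψ : AddChar F R) (a : F) :
    gaussSum η (ψ.mulShift a) = η a * gaussSum η ψ := by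
  have hsum : ∑ a, η a = 0 := by
    simp_rw [MulChar.ringHomComp_apply, ← map_sum, quadraticChar_sum_zero hF, map_zero]
  rw [gaussSum_mulShift_of_sum_eq_zero hsum, ((quadraticChar_isQuadratic F).comp _).inv]

/-- The inner sum over `y` and `z` in `σ`, as a function of the outer variable `c`, for an
arbitrary finite field and additive character. It is meant for odd characteristic: in
characteristic two the quotient by `4 * y` is the junk value `0`. -/
def innerSum (ψ : AddChar F R) (c c₂ c₃ : F) : R :=
  ∑ y with y ≠ 0, ψ (-(y * c₂)) * η (-(c * y)) *
    ∑ z with z ≠ 0, ψ (-(z ^ 2 * c) / (4 * y) - z * c₃)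

lemma innerSum_eq_sum_sum (hF : ringChar F ≠ 2) (ψ : AddChar F R) (c c₂ c₃ : F) :
    innerSum ψ c c₂ c₃ = ∑ w with w ≠ 0, ∑ y with y ≠ 0,
      η (-(c * y)) * ψ (-(c * w ^ 2 + 2 * c₃ * w + c₂) * y) := by
  have h2 : (2 : F) ≠ 0 := Ring.two_ne_zero hF
  rw [sum_comm]
  refine sum_congr rfl fun y hy ↦ ?_
  replace hy : y ≠ 0 := (mem_filter.mp hy).2
  rw [← sum_ne_zero_comp_mul_left (mul_ne_zero h2 hy), mul_sum]
  refine sum_congr rfl fun w _ ↦ ?_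
  have hexp : -(c * w ^ 2 + 2 * c₃ * w + c₂) * y =
      -(y * c₂) + (-((2 * y * w) ^ 2 * c) / (4 * y) - 2 * y * w * c₃) := by
    rw [show (4 : F) = 2 * 2 by norm_num]
    field_simp
    ring
  rw [hexp, AddChar.map_add_eq_mul]
  ring

lemma innerSum_eq_sum_quadraticChar_mul_gaussSum (hF : ringChar F ≠ 2) (ψ : AddChar F R)
    (c c₂ c₃ : F) :
    innerSum ψ c c₂ c₃ =
      (∑ w with w ≠ 0, η ((c * w + c₃) ^ 2 + (c * c₂ - c₃ ^ 2))) * gaussSum η ψ := by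
  rw [innerSum_eq_sum_sum hF, sum_mul]
  refine sum_congr rfl fun w _ ↦ ?_
  let q : F := c * w ^ 2 + 2 * c₃ * w + c₂
  calc ∑ y with y ≠ 0, η (-(c * y)) * ψ (-q * y)
      = ∑ y, η (-c) * (η y * ψ.mulShift (-q) y) := by
        rw [sum_filter_ne_eq_sub, mul_zero, neg_zero, MulChar.map_zero, zero_mul, sub_zero]
        simp_rw [← neg_mul c, map_mul, mul_assoc, AddChar.mulShift_apply]
    _ = η (-c) * (η (-q) * gaussSum η ψ) := by
        rw [← mul_sum, ← gaussSum_quadraticChar_mulShift hF, gaussSum]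
    _ = η ((c * w + c₃) ^ 2 + (c * c₂ - c₃ ^ 2)) * gaussSum η ψ := by
        rw [← mul_assoc, ← map_mul, show -c * -q = (c * w + c₃) ^ 2 + (c * c₂ - c₃ ^ 2) by ring]

lemma innerSum_eq (hF : ringChar F ≠ 2) (ψ : AddChar F R) {c : F} (hc : c ≠ 0) (c₂ c₃ : F) :
    innerSum ψ c c₂ c₃ =
      ((if c * c₂ = c₃ ^ 2 then (Fintype.card F : R) else 0) - 1 - η (c * c₂)) *
        gaussSum η ψ := by
  have haffine : ∑ w, η ((c * w + c₃) ^ 2 + (c * c₂ - c₃ ^ 2)) =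
      ∑ u, η (u ^ 2 + (c * c₂ - c₃ ^ 2)) :=
    Equiv.sum_comp ((Equiv.mulLeft₀ c hc).trans (Equiv.addRight c₃))
      fun u ↦ η (u ^ 2 + (c * c₂ - c₃ ^ 2))
  have hsum : ∑ u, η (u ^ 2 + (c * c₂ - c₃ ^ 2)) =
      (if c * c₂ = c₃ ^ 2 then (Fintype.card F : R) else 0) - 1 := by
    simp_rw [MulChar.ringHomComp_apply, ← map_sum, sum_quadraticChar_sq_add hF, sub_eq_zero]
    split_ifs <;> simp
  rw [innerSum_eq_sum_quadraticChar_mul_gaussSum hF, sum_filter_ne_eq_sub, haffine, hsum,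
    mul_zero, zero_add, add_sub_cancel]

lemma sum_innerSum (hF : ringChar F ≠ 2) (ψ : AddChar F R) {c₂ c₃ : F} (hc₂ : c₂ ≠ 0)
    (hc₃ : c₃ ≠ 0) : ∑ c with c ≠ 0, innerSum ψ c c₂ c₃ = gaussSum η ψ := by
  have hcount : ∑ c : F with c ≠ 0, (if c * c₂ = c₃ ^ 2 then (Fintype.card F : R) else 0) =
      Fintype.card F := by
    simp_rw [← eq_div_iff hc₂]
    rw [sum_ite_eq', if_pos (by simp [hc₂, hc₃])]
  have hη : ∑ c with c ≠ 0, η (c * c₂) = 0 := by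
    simp_rw [map_mul, ← sum_mul, sum_filter_ne_eq_sub, MulChar.ringHomComp_apply, ← map_sum,
      quadraticChar_sum_zero hF, MulChar.map_zero, map_zero, sub_zero, zero_mul]
  have hone : ∑ c : F with c ≠ 0, (1 : R) = Fintype.card F - 1 := by
    rw [sum_filter_ne_eq_sub, sum_const, card_univ, nsmul_one]
  rw [sum_congr rfl fun c hc ↦ innerSum_eq hF ψ (mem_filter.mp hc).2 c₂ c₃, ← sum_mul,
    sum_sub_distrib, sum_sub_distrib, hcount, hη, hone]
  ring

variable [IsDomain R]

lemma sum_sum_addChar_mul {ψ : AddChar F R} (hψ : ψ.IsPrimitive) {s : Finset F} {c₁ : F}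
    (hc₁ : c₁ ∈ s) (f : F → R) :
    ∑ c ∈ s, ∑ x with x ≠ 0, ψ (x * (c - c₁)) * f c =
      Fintype.card F * f c₁ - ∑ c ∈ s, f c := by
  simp_rw [← sum_mul, sum_filter_ne_eq_sub, AddChar.sum_mulShift _ hψ, sub_eq_zero, zero_mul,
    AddChar.map_zero_eq_one, sub_mul, one_mul, sum_sub_distrib, Nat.cast_ite, Nat.cast_zero,
    ite_mul, zero_mul, sum_ite_eq', if_pos hc₁]

theorem sigma_eval_general (hF : ringChar F ≠ 2) {ψ : AddChar F R} (hψ : ψ.IsPrimitive)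
    {c₁ c₂ c₃ : F} (hc₁ : c₁ ≠ 0) (hc₂ : c₂ ≠ 0) (hc₃ : c₃ ≠ 0) :
    (c₃ ^ 2 - c₁ * c₂ = 0 →
      ∑ c with c ≠ 0, ∑ x with x ≠ 0, ψ (x * (c - c₁)) * innerSum ψ c c₂ c₃ =
        ((Fintype.card F : R) ^ 2 - 2 * Fintype.card F - 1) * gaussSum η ψ) ∧
    (c₃ ^ 2 - c₁ * c₂ ≠ 0 →
      ∑ c with c ≠ 0, ∑ x with x ≠ 0, ψ (x * (c - c₁)) * innerSum ψ c c₂ c₃ =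
        -((Fintype.card F + 1) * gaussSum η ψ) -
          Fintype.card F * η (c₁ * c₂) * gaussSum η ψ) := by
  rw [sum_sum_addChar_mul hψ (by simp [hc₁]), sum_innerSum hF ψ hc₂ hc₃, innerSum_eq hF ψ hc₁,
    Ne, sub_eq_zero]
  refine ⟨fun h ↦ ?_, fun h ↦ ?_⟩
  · have hη : η (c₁ * c₂) = 1 := by
      rw [← h, MulChar.ringHomComp_apply, quadraticChar_sq_one' hc₃, map_one]
    rw [if_pos h.symm, hη]
    ring
  · rw [if_neg (Ne.symm h)]
    ring

end FiniteField

lemma chiBar_eq_stdAddChar (n : ℕ) [NeZero n] (a : ZMod n) : chiBar n a = ZMod.stdAddChar a := by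
  rw [chiBar, zeta, ← Complex.exp_nat_mul, ZMod.stdAddChar_apply, ZMod.toCircle_apply]
  congr 1
  ring

section Prime

variable (p : ℕ) [Fact p.Prime]

lemma etaBar_eq_quadraticChar (a : ZMod p) :
    etaBar p a = (quadraticChar (ZMod p)).ringHomComp (Int.castRingHom ℂ) a := by
  rw [MulChar.ringHomComp_apply, quadraticChar_apply, quadraticCharFun, etaBar]
  split_ifs <;> simp

lemma gaussP_eq_gaussSum :
    GaussP p =
      gaussSum ((quadraticChar (ZMod p)).ringHomComp (Int.castRingHom ℂ)) ZMod.stdAddChar := by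
  simp_rw [GaussP, etaBar_eq_quadraticChar, chiBar_eq_stdAddChar, sum_filter_ne_eq_sub,
    MulChar.map_zero, zero_mul, sub_zero, gaussSum]

end Prime

theorem sigma_eval (p : ℕ) [Fact (Nat.Prime p)] (hp : Odd p)
    (c₁ c₂ c₃ : ZMod p) (hc₁ : c₁ ≠ 0) (hc₂ : c₂ ≠ 0) (hc₃ : c₃ ≠ 0) :
    (c₃ ^ 2 - c₁ * c₂ = 0 →
      (∑ c ∈ univ.filter (fun c : ZMod p => c ≠ 0), ∑ x ∈ univ.filter (fun x : ZMod p => x ≠ 0), chiBar p (x * (c - c₁)) *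
      ∑ y ∈ univ.filter (fun y : ZMod p => y ≠ 0), chiBar p (-(y * c₂)) * etaBar p (-(c * y)) *
        ∑ z ∈ univ.filter (fun z : ZMod p => z ≠ 0), chiBar p (-(z ^ 2 * c) / (4 * y) - z * c₃)) = ((p : ℂ) ^ 2 - 2 * (p : ℂ) - 1) * GaussP p) ∧
    (c₃ ^ 2 - c₁ * c₂ ≠ 0 →
      (∑ c ∈ univ.filter (fun c : ZMod p => c ≠ 0), ∑ x ∈ univ.filter (fun x : ZMod p => x ≠ 0), chiBar p (x * (c - c₁)) *
      ∑ y ∈ univ.filter (fun y : ZMod p => y ≠ 0), chiBar p (-(y * c₂)) * etaBar p (-(c * y)) *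
        ∑ z ∈ univ.filter (fun z : ZMod p => z ≠ 0), chiBar p (-(z ^ 2 * c) / (4 * y) - z * c₃)) = -(((p : ℂ) + 1) * GaussP p) - (p : ℂ) * etaBar p (c₁ * c₂) * GaussP p) := by
  have hF : ringChar (ZMod p) ≠ 2 := by
    rw [ZMod.ringChar_zmod_n]
    exact hp.ne_two_of_dvd_nat dvd_rfl
  simpa only [innerSum, chiBar_eq_stdAddChar, etaBar_eq_quadraticChar, gaussP_eq_gaussSum,
    ZMod.card] using sigma_eval_general hF (ZMod.isPrimitive_stdAddChar p) hc₁ hc₂ hc₃
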